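/- For every real number y, the following decay bounds hold: |W̄(y)| ≤ ⟨y⟩^{1/3}, |W̄'(y)| ≤ ⟨y⟩^{−2/3}, and |W̄''(y)| ≤ ⟨y⟩^{−5/3}, where W̄' and W̄'' denote the first and second derivatives of W̄. -/

import Mathlib

/-- The stable self-similar Burgers profile `W̄`. -/
noncomputable def Wbar (y : ℝ) : ℝ :=
  (-y / 2 + Real.sqrt (1 / 27 + y ^ 2 / 4)) ^ ((1 : ℝ) / 3) -
  (y / 2 + Real.sqrt (1 / 27 + y ^ 2 / 4)) ^ ((1 : ℝ) / 3)

/-!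
By Cardano's formula `w = W̄(y)` is the real root of `w³ + w + y = 0`. Implicit differentiation
gives `W̄' = -1 / (1 + 3w²)` and `W̄'' = -6w / (1 + 3w²)³`. With `t = ⟨y⟩^{1/3}` the cubic reads
`t⁶ = 1 + w²(1 + w²)²`, so the three bounds become `|w| ≤ t`, `t² ≤ 1 + 3w²` and
`6|w|t⁵ ≤ (1 + 3w²)³`. Only the last one is delicate: its square is turned into a polynomial
inequality in `w²` by writing `t¹⁰ = t¹² / t²` and bounding `t²` below by `1 + w²/3`.
-/

section CubeRoot

variable {x : ℝ}

lemma rpow_one_third_pow_three (hx : 0 ≤ x) : (x ^ ((1 : ℝ) / 3)) ^ 3 = x := by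
  simpa using Real.rpow_inv_natCast_pow hx three_ne_zero

lemma rpow_neg_natCast_div_three (hx : 0 ≤ x) (n : ℕ) :
    x ^ (-(n : ℝ) / 3) = ((x ^ ((1 : ℝ) / 3)) ^ n)⁻¹ := by
  rw [← Real.rpow_mul_natCast hx, ← Real.rpow_neg hx]
  congr 1
  ring

lemma sqrt_rpow_one_third_pow_six (hx : 0 ≤ x) : (√x ^ ((1 : ℝ) / 3)) ^ 6 = x := by
  rw [pow_mul _ 3 2, rpow_one_third_pow_three (Real.sqrt_nonneg x), Real.sq_sqrt hx]

end CubeRoot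

lemma cardano_depressed_cubic {p : ℝ} (hp : 0 ≤ p) (q : ℝ) :
    let x := (-q / 2 + √(p ^ 3 / 27 + q ^ 2 / 4)) ^ ((1 : ℝ) / 3) -
      (q / 2 + √(p ^ 3 / 27 + q ^ 2 / 4)) ^ ((1 : ℝ) / 3)
    x ^ 3 + p * x + q = 0 := by
  set r := √(p ^ 3 / 27 + q ^ 2 / 4)
  have r_sq : r ^ 2 = p ^ 3 / 27 + q ^ 2 / 4 := Real.sq_sqrt (by positivity)
  have abs_le_r : |q / 2| ≤ r := Real.abs_le_sqrt (by linarith [pow_nonneg hp 3])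
  have minus_nonneg : 0 ≤ -q / 2 + r := by linarith [le_of_abs_le abs_le_r]
  have plus_nonneg : 0 ≤ q / 2 + r := by linarith [neg_le_of_abs_le abs_le_r]
  have mul_eq : (-q / 2 + r) ^ ((1 : ℝ) / 3) * (q / 2 + r) ^ ((1 : ℝ) / 3) = p / 3 := by
    rw [← Real.mul_rpow minus_nonneg plus_nonneg,
      show (-q / 2 + r) * (q / 2 + r) = (p / 3) ^ 3 by linear_combination r_sq]
    simpa using Real.pow_rpow_inv_natCast (div_nonneg hp zero_le_three) three_ne_zero
  intro x
  linear_combination rpow_one_third_pow_three minus_nonneg -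
    rpow_one_third_pow_three plus_nonneg - 3 * x * mul_eq

lemma Wbar_cubic (y : ℝ) : Wbar y ^ 3 + Wbar y + y = 0 := by
  simpa [Wbar] using cardano_depressed_cubic zero_le_one y

lemma Wbar_sq_mul_one_add_sq (y : ℝ) : Wbar y ^ 2 * (1 + Wbar y ^ 2) ^ 2 = y ^ 2 := by
  linear_combination (Wbar y ^ 3 + Wbar y - y) * Wbar_cubic y

lemma continuous_Wbar : Continuous Wbar := by
  unfold Wbar
  fun_prop (disch := norm_num)

lemma hasDerivAt_Wbar (y : ℝ) : HasDerivAt Wbar (-(1 + 3 * Wbar y ^ 2)⁻¹) y := by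
  have cubic_deriv : HasDerivAt (fun w : ℝ ↦ -(w + w ^ 3)) (-(1 + 3 * Wbar y ^ 2)) (Wbar y) := by
    simpa using ((hasDerivAt_id' (Wbar y)).fun_add (hasDerivAt_pow 3 (Wbar y))).fun_neg
  have left_inverse (z : ℝ) : -(Wbar z + Wbar z ^ 3) = z := by linarith [Wbar_cubic z]
  rw [← inv_neg]
  exact cubic_deriv.of_local_left_inverse continuous_Wbar.continuousAt
    (neg_ne_zero.mpr (by positivity)) (.of_forall left_inverse)

lemma iteratedDeriv_two_Wbar (y : ℝ) :
    iteratedDeriv 2 Wbar y = -(6 * Wbar y) / (1 + 3 * Wbar y ^ 2) ^ 3 := by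
  have deriv_Wbar : deriv Wbar = fun z ↦ -(1 + 3 * Wbar z ^ 2)⁻¹ :=
    funext fun z ↦ (hasDerivAt_Wbar z).deriv
  have ne_zero : 1 + 3 * Wbar y ^ 2 ≠ 0 := by positivity
  rw [iteratedDeriv_succ, iteratedDeriv_one, deriv_Wbar]
  refine ((((hasDerivAt_Wbar y).fun_pow 2).const_mul 3).const_add 1 |>.fun_inv ne_zero).fun_neg
    |>.deriv.trans ?_
  push_cast
  field_simp
  ring

lemma thirtySix_mul_mul_one_add_sq_le {s : ℝ} (hs : 0 ≤ s) :
    36 * s * (1 + s * (1 + s) ^ 2) ^ 2 ≤ (1 + 3 * s) ^ 6 * (1 + s / 3) := by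
  -- In right side minus left side only the coefficient `-53/3` of `s` is negative;
  -- the two squares absorb it.
  have remainder_nonneg : 0 ≤ 197 / 9 * s ^ 2 + 5 * s ^ 3 + 1179 * s ^ 4 + 1647 * s ^ 5 +
      1071 * s ^ 6 + 207 * s ^ 7 := by positivity
  have squares_nonneg : 0 ≤ (1 - 28 / 3 * s) ^ 2 + s * (20 * s - 1) ^ 2 := by positivity
  linarith

section SexticRelation

variable {w t : ℝ}

lemma sq_le_one_add_sq_of_pow_six_eq (h : t ^ 6 = 1 + w ^ 2 * (1 + w ^ 2) ^ 2) :
    t ^ 2 ≤ 1 + w ^ 2 := by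
  refine le_of_pow_le_pow_left₀ three_ne_zero (by positivity) ?_
  calc (t ^ 2) ^ 3 = 1 + w ^ 2 * (1 + w ^ 2) ^ 2 := by rw [← h]; ring
    _ ≤ (1 + w ^ 2) ^ 3 := by linarith [sq_nonneg w, pow_nonneg (sq_nonneg w) 2]

lemma one_add_sq_div_three_le_sq_of_pow_six_eq (h : t ^ 6 = 1 + w ^ 2 * (1 + w ^ 2) ^ 2) :
    1 + w ^ 2 / 3 ≤ t ^ 2 := by
  refine le_of_pow_le_pow_left₀ three_ne_zero (by positivity) ?_
  calc (1 + w ^ 2 / 3) ^ 3 ≤ 1 + w ^ 2 * (1 + w ^ 2) ^ 2 := by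
        linarith [pow_nonneg (sq_nonneg w) 2, pow_nonneg (sq_nonneg w) 3]
    _ = (t ^ 2) ^ 3 := by rw [← h]; ring

lemma abs_le_of_pow_six_eq (h : t ^ 6 = 1 + w ^ 2 * (1 + w ^ 2) ^ 2) (ht : 0 ≤ t) :
    |w| ≤ t := by
  refine le_of_pow_le_pow_left₀ (by norm_num : 6 ≠ 0) ht ?_
  rw [h, Even.pow_abs (by decide)]
  linarith [sq_nonneg w, pow_nonneg (sq_nonneg w) 2]

lemma six_mul_abs_mul_pow_five_le_of_pow_six_eq (h : t ^ 6 = 1 + w ^ 2 * (1 + w ^ 2) ^ 2) :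
    6 * |w| * t ^ 5 ≤ (1 + 3 * w ^ 2) ^ 3 := by
  refine le_of_sq_le_sq ?_ (by positivity)
  have factor_pos : 0 < 1 + w ^ 2 / 3 := by positivity
  refine le_of_mul_le_mul_right ?_ factor_pos
  calc (6 * |w| * t ^ 5) ^ 2 * (1 + w ^ 2 / 3)
      = 36 * w ^ 2 * t ^ 10 * (1 + w ^ 2 / 3) := by rw [← sq_abs w]; ring
    _ ≤ 36 * w ^ 2 * t ^ 10 * t ^ 2 := by gcongr; exact one_add_sq_div_three_le_sq_of_pow_six_eq h
    _ = 36 * w ^ 2 * (1 + w ^ 2 * (1 + w ^ 2) ^ 2) ^ 2 := by rw [← h]; ring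
    _ ≤ (1 + 3 * w ^ 2) ^ 6 * (1 + w ^ 2 / 3) := thirtySix_mul_mul_one_add_sq_le (sq_nonneg w)
    _ = ((1 + 3 * w ^ 2) ^ 3) ^ 2 * (1 + w ^ 2 / 3) := by ring

end SexticRelation

/-- Decay bounds for `W̄` and its first two derivatives in terms of the Japanese bracket
`⟨y⟩ = (1 + y²)^{1/2}`:  `|W̄(y)| ≤ ⟨y⟩^{1/3}`, `|W̄'(y)| ≤ ⟨y⟩^{−2/3}`,
`|W̄''(y)| ≤ ⟨y⟩^{−5/3}`. -/
theorem Wbar_decay_bounds (y : ℝ) :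
    |Wbar y| ≤ Real.sqrt (1 + y ^ 2) ^ ((1 : ℝ) / 3) ∧
    |deriv Wbar y| ≤ Real.sqrt (1 + y ^ 2) ^ (-(2 : ℝ) / 3) ∧
    |iteratedDeriv 2 Wbar y| ≤ Real.sqrt (1 + y ^ 2) ^ (-(5 : ℝ) / 3) := by
  have neg_two_thirds := rpow_neg_natCast_div_three (Real.sqrt_nonneg (1 + y ^ 2)) 2
  have neg_five_thirds := rpow_neg_natCast_div_three (Real.sqrt_nonneg (1 + y ^ 2)) 5
  push_cast at neg_two_thirds neg_five_thirds
  rw [neg_two_thirds, neg_five_thirds]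
  have pow_six : (√(1 + y ^ 2) ^ ((1 : ℝ) / 3)) ^ 6 = 1 + Wbar y ^ 2 * (1 + Wbar y ^ 2) ^ 2 := by
    rw [sqrt_rpow_one_third_pow_six (by positivity), Wbar_sq_mul_one_add_sq]
  have t_pos : 0 < √(1 + y ^ 2) ^ ((1 : ℝ) / 3) := by positivity
  have slope_pos : 0 < 1 + 3 * Wbar y ^ 2 := by positivity
  generalize √(1 + y ^ 2) ^ ((1 : ℝ) / 3) = t at *
  refine ⟨abs_le_of_pow_six_eq pow_six t_pos.le, ?_, ?_⟩
  · rw [(hasDerivAt_Wbar y).deriv, abs_neg, abs_inv, abs_of_pos slope_pos]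
    refine inv_anti₀ (by positivity) ?_
    linarith [sq_le_one_add_sq_of_pow_six_eq pow_six, sq_nonneg (Wbar y)]
  · rw [iteratedDeriv_two_Wbar, abs_div, abs_neg, abs_mul, abs_of_pos (pow_pos slope_pos 3),
      div_le_iff₀ (by positivity), inv_mul_eq_div, le_div_iff₀ (by positivity)]
    simpa using six_mul_abs_mul_pow_five_le_of_pow_six_eq pow_six
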